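/- The 24 cyclic shifts modulo 24 of the block {1,2,3,5,6,8,12,13,15,21} form a (24,10,3) covering design; hence C(24,10,3) ≤ 24. -/

import Mathlib

/-- A `(v,k,t)` covering design: a family of `k`-element subsets (blocks) of a
`v`-element set such that every `t`-element subset is contained in at least one block. -/
def IsCoverDesign (v k t : ℕ) (B : Finset (Finset (Fin v))) : Prop :=
  (∀ b ∈ B, b.card = k) ∧
  ∀ s : Finset (Fin v), s.card = t → ∃ b ∈ B, s ⊆ b

/-- `coverNumber v k t` is `C(v,k,t)`, the minimum number of blocks in a
`(v,k,t)` covering design. -/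
noncomputable def coverNumber (v k t : ℕ) : ℕ :=
  sInf {n : ℕ | ∃ B : Finset (Finset (Fin v)), IsCoverDesign v k t B ∧ B.card = n}

theorem cover_aux : ∀ x y : ZMod 24,
    ∃ j ∈ ({1, 2, 3, 5, 6, 8, 12, 13, 15, 21} : Finset (ZMod 24)),
      j + x ∈ ({1, 2, 3, 5, 6, 8, 12, 13, 15, 21} : Finset (ZMod 24)) ∧
      j + y ∈ ({1, 2, 3, 5, 6, 8, 12, 13, 15, 21} : Finset (ZMod 24)) := by
  decide +kernel

theorem cover_part (s : Finset (ZMod 24)) (hs : s.card = 3) :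
    ∃ i : ZMod 24,
      s ⊆ ({1, 2, 3, 5, 6, 8, 12, 13, 15, 21} : Finset (ZMod 24)).image (· + i) := by
  obtain ⟨a, b, c, -, -, -, rfl⟩ := Finset.card_eq_three.mp hs
  obtain ⟨j, h0, h1, h2⟩ := cover_aux (b - a) (c - a)
  refine ⟨a - j, fun z hz => ?_⟩
  rw [Finset.mem_image]
  rw [Finset.mem_insert, Finset.mem_insert, Finset.mem_singleton] at hz
  rcases hz with rfl | rfl | rfl
  · exact ⟨j, h0, by ring⟩
  · exact ⟨_, h1, by ring⟩
  · exact ⟨_, h2, by ring⟩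

/-- The family of all cyclic shifts of the starting block. -/
def shiftFamily : Finset (Finset (ZMod 24)) :=
  Finset.univ.image fun i : ZMod 24 =>
    ({1, 2, 3, 5, 6, 8, 12, 13, 15, 21} : Finset (ZMod 24)).image (· + i)

theorem shiftFamily_card_le : shiftFamily.card ≤ 24 :=
  Finset.card_image_le.trans (by simp [ZMod.card])

theorem shiftFamily_block (b : Finset (ZMod 24)) (hb : b ∈ shiftFamily) : b.card = 10 := by
  obtain ⟨i, -, rfl⟩ := Finset.mem_image.mp hb
  rw [Finset.card_image_of_injective _ (add_left_injective i)]
  decide +kernel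

theorem shiftFamily_cover (s : Finset (ZMod 24)) (hs : s.card = 3) :
    ∃ b ∈ shiftFamily, s ⊆ b := by
  obtain ⟨i, hi⟩ := cover_part s hs
  exact ⟨_, Finset.mem_image_of_mem _ (Finset.mem_univ i), hi⟩

/-- The 24 cyclic shifts modulo 24 of the block `{1,2,3,5,6,8,12,13,15,21}` cover every
3-subset of `Z/24Z`, i.e. they form a `(24,10,3)` covering design; hence
`C(24,10,3) ≤ 24`. -/
theorem cyclic_cover_24_10_3 :
    (∀ s : Finset (ZMod 24), s.card = 3 →
       ∃ i : ZMod 24,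
         s ⊆ ({1, 2, 3, 5, 6, 8, 12, 13, 15, 21} : Finset (ZMod 24)).image (· + i)) ∧
    coverNumber 24 10 3 ≤ 24 := by
  refine ⟨cover_part, ?_⟩
  have h : IsCoverDesign 24 10 3 shiftFamily := ⟨shiftFamily_block, shiftFamily_cover⟩
  have h2 : coverNumber 24 10 3 ≤ shiftFamily.card := by
    unfold coverNumber
    apply Nat.sInf_le
    exact ⟨shiftFamily, h, rfl⟩
  exact h2.trans shiftFamily_card_le
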